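/- For all finite trees Ψ, T, Λ and Υ there exists a bicyclic graph Δ such that Aut(Δ) ≅ Aut(Ψ) × ((D⁴ × H² × K²) ⋊ (Z₂ × Z₂)), where D = Aut(T), H = Aut(Λ), K = Aut(Υ), and the generator a of Z₂ × Z₂ sends (d₁,d₂,d₃,d₄,h₁,h₂,k₁,k₂) to (d₃,d₄,d₁,d₂,h₂,h₁,k₁,k₂) while the generator b sends it to (d₂,d₁,d₄,d₃,h₁,h₂,k₂,k₁). -/

import Mathlib

open SimpleGraph

/-- The automorphism of `ι → G` given by permuting coordinates by `σ`. -/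
def permAut {ι G : Type} [Group G] (σ : Equiv.Perm ι) : MulAut (ι → G) where
  toFun f := f ∘ σ.symm
  invFun f := f ∘ σ
  left_inv f := by funext i; simp
  right_inv f := by funext i; simp
  map_mul' f g := rfl

/-- The action of `Equiv.Perm ι` on `ι → G` by permuting coordinates, as a homomorphism. -/
def permHom (ι G : Type) [Group G] : Equiv.Perm ι →* MulAut (ι → G) where
  toFun := permAut
  map_one' := by ext f i; rfl
  map_mul' σ τ := by ext f i; rfl

/-- Combine two actions-by-automorphisms into one on the direct product. -/
def autProdHom {Q M N : Type} [Group Q] [Group M] [Group N]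
    (φ : Q →* MulAut M) (ψ : Q →* MulAut N) : Q →* MulAut (M × N) where
  toFun q := (φ q).prodCongr (ψ q)
  map_one' := by
    show MulEquiv.prodCongr (φ 1) (ψ 1) = 1
    rw [map_one, map_one]; ext x <;> rfl
  map_mul' a b := by
    show MulEquiv.prodCongr (φ (a * b)) (ψ (a * b)) = _
    rw [map_mul, map_mul]; ext x <;> rfl

/-- The translation action of an additive group on itself, as permutations. -/
def transPermHom (A : Type) [AddGroup A] : Multiplicative A →* Equiv.Perm A :=
  MulAction.toPermHom (Multiplicative A) A

/-- The action of (the multiplicative version of) an additive group `A` on `A → G`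
by translating the coordinates. -/
def transAutHom (A G : Type) [AddGroup A] [Group G] : Multiplicative A →* MulAut (A → G) :=
  (permHom A G).comp (transPermHom A)

/-- The Klein four-group `Z₂ × Z₂` (written multiplicatively). -/
abbrev K4 : Type := Multiplicative (ZMod 2 × ZMod 2)

/-- Projection of the Klein four-group onto its first `Z₂` factor. -/
def fstK : K4 →* Multiplicative (ZMod 2) :=
  AddMonoidHom.toMultiplicative (AddMonoidHom.fst (ZMod 2) (ZMod 2))

/-- Projection of the Klein four-group onto its second `Z₂` factor. -/
def sndK : K4 →* Multiplicative (ZMod 2) :=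
  AddMonoidHom.toMultiplicative (AddMonoidHom.snd (ZMod 2) (ZMod 2))

/-- The action of `Z₂ × Z₂` on `D⁴ × H² × K²` in which the generator `a = (1,0)` sends
`(d₁,d₂,d₃,d₄,h₁,h₂,k₁,k₂)` to `(d₃,d₄,d₁,d₂,h₂,h₁,k₁,k₂)` and the generator `b = (0,1)` sends
it to `(d₂,d₁,d₄,d₃,h₁,h₂,k₂,k₁)`: the four `D`-coordinates are indexed by
`(0,0), (0,1), (1,0), (1,1) : Z₂ × Z₂` and translated, and the pairs of `H`- resp.
`K`-coordinates are indexed by `Z₂` and translated by the first resp. second component. -/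
def B2act (D H K : Type) [Group D] [Group H] [Group K] :
    K4 →* MulAut ((ZMod 2 × ZMod 2 → D) × (ZMod 2 → H) × (ZMod 2 → K)) :=
  autProdHom (transAutHom (ZMod 2 × ZMod 2) D)
    (autProdHom ((transAutHom (ZMod 2) H).comp fstK) ((transAutHom (ZMod 2) K).comp sndK))

/-- The group `(D⁴ × H² × K²) ⋊ (Z₂ × Z₂)` appearing in the class `𝓑₂`. -/
def B2group (D H K : Type) [Group D] [Group H] [Group K] : Type :=
  ((ZMod 2 × ZMod 2 → D) × (ZMod 2 → H) × (ZMod 2 → K)) ⋊[B2act D H K] K4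

instance (D H K : Type) [Group D] [Group H] [Group K] : Group (B2group D H K) :=
  inferInstanceAs (Group (_ ⋊[B2act D H K] K4))

/-- A graph is bicyclic if it is connected and its number of edges exceeds its number of
vertices by exactly one (i.e. it has cyclomatic number 2). -/
def SimpleGraph.IsBicyclic {V : Type} (G : SimpleGraph V) : Prop :=
  G.Connected ∧ G.edgeSet.ncard = Nat.card V + 1

/-!
On a tree the sum of the distances to all vertices is strictly convex along paths, so its
minimisers, the medians, are a single vertex or two adjacent vertices. Hanging the tree from a new
root placed above its medians turns it into a rooted tree with the same automorphism group.

Such rooted trees are attached at their roots to the theta graph with path lengths 2, 4, 4, whose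
automorphism group is the Klein four-group with vertex orbits of sizes 1, 2, 2 and 4; one tree is
used for each orbit. Attaching trees does not change the cyclomatic number. As every vertex of the
theta graph has two neighbours there, an automorphism of the resulting graph preserves the theta
graph and the parent functions of the attached trees. Those acting trivially on the theta graph
form the product of the automorphism groups of the attached copies, and the Klein four-group lifts
to the permutations of these copies.
-/

section TotalDist

variable {V : Type*} {T : SimpleGraph V}

theorem dist_map_le {V' : Type*} {T' : SimpleGraph V'} (f : T →g T') {u v : V}
    (huv : T.Reachable u v) : T'.dist (f u) (f v) ≤ T.dist u v := by
  obtain ⟨p, hp⟩ := huv.exists_walk_length_eq_dist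
  simpa [hp] using SimpleGraph.dist_le (p.map f)

theorem dist_map_iso {V' : Type*} {T' : SimpleGraph V'} (φ : T ≃g T') (u v : V) :
    T'.dist (φ u) (φ v) = T.dist u v := by
  by_cases huv : T.Reachable u v
  · refine (dist_map_le φ.toHom huv).antisymm ?_
    simpa using dist_map_le φ.symm.toHom (huv.map φ.toHom)
  · rw [dist_eq_zero_of_not_reachable huv, dist_eq_zero_of_not_reachable]
    rwa [Iso.reachable_iff]

theorem eq_of_adj_of_dist_eq_add_one (hT : T.IsTree) (z : V) {v u w : V}
    (hu : T.Adj v u) (hw : T.Adj v w) (hzu : T.dist z v = T.dist z u + 1)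
    (hzw : T.dist z v = T.dist z w + 1) : u = w := by
  obtain ⟨p, -, hp⟩ := hT.connected.exists_path_of_dist z u
  obtain ⟨q, -, hq⟩ := hT.connected.exists_path_of_dist z w
  have p_concat_isPath : (p.concat hu.symm).IsPath :=
    Walk.isPath_of_length_eq_dist _ (by simp [hzu, hp])
  have q_concat_isPath : (q.concat hw.symm).IsPath :=
    Walk.isPath_of_length_eq_dist _ (by simp [hzw, hq])
  have concat_eq : p.concat hu.symm = q.concat hw.symm := congrArg Subtype.val <|
    (hT.isAcyclic.subsingleton_path z v).elim ⟨_, p_concat_isPath⟩ ⟨_, q_concat_isPath⟩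
  simpa using congrArg Walk.penultimate concat_eq

variable [Fintype V]

/-- The sum of the distances from `v` to all vertices. -/
noncomputable def totalDist (T : SimpleGraph V) (v : V) : ℕ :=
  ∑ z, T.dist z v

theorem totalDist_map_iso {V' : Type*} [Fintype V'] {T' : SimpleGraph V'} (φ : T ≃g T') (v : V) :
    totalDist T' (φ v) = totalDist T v :=
  calc ∑ z, T'.dist z (φ v) = ∑ z, T'.dist (φ z) (φ v) := (Equiv.sum_comp φ.toEquiv _).symm
    _ = ∑ z, T.dist z v := by simp only [dist_map_iso]

theorem two_mul_totalDist_lt (hT : T.IsTree) {v u w : V} (hu : T.Adj v u) (hw : T.Adj v w)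
    (huw : u ≠ w) : 2 * totalDist T v < totalDist T u + totalDist T w := by
  simp only [totalDist, Finset.mul_sum, ← Finset.sum_add_distrib]
  refine Finset.sum_lt_sum (fun z _ ↦ ?_) ⟨v, Finset.mem_univ v, ?_⟩
  · have hzu := hT.dist_eq_dist_add_one_of_adj z hu
    have hzw := hT.dist_eq_dist_add_one_of_adj z hw
    have not_both_closer : ¬(T.dist z v = T.dist z u + 1 ∧ T.dist z v = T.dist z w + 1) :=
      fun h ↦ huw (eq_of_adj_of_dist_eq_add_one hT z hu hw h.1 h.2)
    omega
  · simp [dist_eq_one_iff_adj.2 hu]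

theorem eq_of_adj_of_totalDist_le (hT : T.IsTree) {v u w : V} (hu : T.Adj v u) (hw : T.Adj v w)
    (hvu : totalDist T u ≤ totalDist T v) (hvw : totalDist T w ≤ totalDist T v) : u = w := by
  by_contra huw
  have := two_mul_totalDist_lt hT hu hw huw
  omega

theorem eq_or_totalDist_lt_of_isPath_cons (hT : T.IsTree) {v u y : V} (h : T.Adj v u)
    (q : T.Walk u y) (hp : (q.cons h).IsPath) (hvu : totalDist T v ≤ totalDist T u) :
    u = y ∨ totalDist T v < totalDist T y := by
  induction q generalizing v with
  | nil => exact .inl rfl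
  | @cons u w y h' q ih =>
    have hvw : v ≠ w := by
      rintro rfl
      simp at hp
    have huw : totalDist T u < totalDist T w := by
      have := two_mul_totalDist_lt hT h.symm h' hvw
      omega
    rcases ih h' hp.of_cons huw.le with rfl | huy
    · exact .inr (hvu.trans_lt huw)
    · exact .inr (hvu.trans_lt huy)

theorem adj_or_totalDist_lt_of_forall_adj_le (hT : T.IsTree) {v y : V} (hvy : v ≠ y)
    (hv : ∀ u, T.Adj v u → totalDist T v ≤ totalDist T u) :
    T.Adj v y ∨ totalDist T v < totalDist T y := by
  obtain ⟨p, hp⟩ := hT.connected.exists_isPath v y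
  cases p with
  | nil => exact absurd rfl hvy
  | cons h q =>
    refine (eq_or_totalDist_lt_of_isPath_cons hT h q hp (hv _ h)).imp_left ?_
    rintro rfl
    exact h

theorem adj_of_forall_adj_totalDist_le (hT : T.IsTree) {v y : V} (hvy : v ≠ y)
    (hv : ∀ u, T.Adj v u → totalDist T v ≤ totalDist T u)
    (hy : ∀ u, T.Adj y u → totalDist T y ≤ totalDist T u) : T.Adj v y := by
  rcases adj_or_totalDist_lt_of_forall_adj_le hT hvy hv with h | hlt
  · exact h
  · rcases adj_or_totalDist_lt_of_forall_adj_le hT hvy.symm hy with h | hgt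
    · exact h.symm
    · exact absurd hlt hgt.asymm

end TotalDist

/-- A rooted tree on the vertex set `β`, given by its parent function. The root is its own parent;
`height` is any function decreasing along the parent function, which rules out cycles. -/
structure ParentTree (β : Type*) where
  root : β
  parent : β → β
  height : β → ℕ
  parent_root : parent root = root
  height_parent_lt : ∀ x, x ≠ root → height (parent x) < height x

namespace ParentTree

variable {β : Type*} (B : ParentTree β)

theorem parent_eq_self_iff {x : β} : B.parent x = x ↔ x = B.root where
  mp hx := by
    by_contra hne
    exact (B.height_parent_lt x hne).ne (congrArg B.height hx)
  mpr hx := hx ▸ B.parent_root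

theorem parent_parent_ne {x : β} (hx : x ≠ B.root) : B.parent (B.parent x) ≠ x := by
  intro hpp
  have hlt := B.height_parent_lt x hx
  by_cases hroot : B.parent x = B.root
  · rw [hroot, B.parent_root] at hpp
    exact hx hpp.symm
  · have := B.height_parent_lt _ hroot
    rw [hpp] at this
    omega

theorem induction_on_parent {P : β → Prop} (root : P B.root)
    (step : ∀ x, x ≠ B.root → P (B.parent x) → P x) (x : β) : P x := by
  induction hn : B.height x using Nat.strong_induction_on generalizing x with
  | _ n ih =>
    by_cases hx : x = B.root
    · exact hx ▸ root
    · exact step x hx (ih _ (hn ▸ B.height_parent_lt x hx) _ rfl)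

/-- The automorphism group of a rooted tree: the permutations commuting with the parent
function. -/
def aut : Subgroup (Equiv.Perm β) where
  carrier := {σ | Function.Semiconj σ B.parent B.parent}
  mul_mem' hσ hτ := hσ.comp_left hτ
  one_mem' := Function.Semiconj.id_left
  inv_mem' {σ} hσ := hσ.inverse_left σ.left_inv σ.right_inv

theorem aut_apply_root {B : ParentTree β} (σ : B.aut) : σ.1 B.root = B.root := by
  rw [← B.parent_eq_self_iff, ← σ.2 B.root, B.parent_root]

end ParentTree

section MedianRooting

variable {V : Type*} [Fintype V] {T : SimpleGraph V}

open Classical in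
/-- The neighbour of `v` of smaller `totalDist`, which is unique if `T` is a tree; `none` if
there is no such neighbour, i.e. if `v` is a median. -/
noncomputable def towardMedian (T : SimpleGraph V) (v : V) : Option V :=
  if h : ∃ u, T.Adj v u ∧ totalDist T u < totalDist T v then some h.choose else none

theorem towardMedian_eq_some_iff (hT : T.IsTree) {v u : V} :
    towardMedian T v = some u ↔ T.Adj v u ∧ totalDist T u < totalDist T v := by
  by_cases h : ∃ u, T.Adj v u ∧ totalDist T u < totalDist T v
  · have hspec := h.choose_spec
    rw [towardMedian, dif_pos h, Option.some_inj]
    exact ⟨fun hu ↦ hu ▸ hspec, fun hu ↦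
      eq_of_adj_of_totalDist_le hT hspec.1 hu.1 hspec.2.le hu.2.le⟩
  · simpa [towardMedian, h] using not_exists.1 h u

theorem towardMedian_eq_none_iff {v : V} :
    towardMedian T v = none ↔ ∀ u, T.Adj v u → totalDist T v ≤ totalDist T u := by
  simp [towardMedian]

theorem towardMedian_map_iso (hT : T.IsTree) (φ : T ≃g T) (v : V) :
    towardMedian T (φ v) = (towardMedian T v).map φ := by
  ext w
  obtain ⟨u, rfl⟩ := φ.surjective w
  simp [towardMedian_eq_some_iff hT, totalDist_map_iso, φ.map_adj_iff]

theorem adj_iff_towardMedian (hT : T.IsTree) {u v : V} :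
    T.Adj u v ↔ towardMedian T u = some v ∨ towardMedian T v = some u ∨
      u ≠ v ∧ towardMedian T u = none ∧ towardMedian T v = none where
  mp huv := by
    simp only [towardMedian_eq_some_iff hT, towardMedian_eq_none_iff, huv, huv.symm, true_and]
    rcases lt_trichotomy (totalDist T u) (totalDist T v) with hlt | heq | hgt
    · exact .inr (.inl hlt)
    · refine .inr (.inr ⟨huv.ne, fun w huw ↦ ?_, fun w hvw ↦ ?_⟩) <;> by_contra! hw
      · have := eq_of_adj_of_totalDist_le hT huv huw heq.ge hw.le
        grind
      · have := eq_of_adj_of_totalDist_le hT huv.symm hvw heq.le hw.le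
        grind
    · exact .inl hgt
  mpr h := by
    rcases h with h | h | ⟨hne, hu, hv⟩
    · exact ((towardMedian_eq_some_iff hT).1 h).1
    · exact ((towardMedian_eq_some_iff hT).1 h).1.symm
    · rw [towardMedian_eq_none_iff] at hu hv
      exact adj_of_forall_adj_totalDist_le hT hne hu hv

/-- The rooted tree obtained from a tree `T` by adding a new root `none` that becomes the parent of
the medians of `T`. If there are two medians, then the edge joining them is removed. -/
noncomputable def medianRooting (hT : T.IsTree) : ParentTree (Option V) where
  root := none
  parent x := x.bind (towardMedian T)
  height x := x.elim 0 (totalDist T · + 1)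
  parent_root := rfl
  height_parent_lt
    | none, h => absurd rfl h
    | some v, _ => by
      rcases hv : towardMedian T v with _ | u
      · simp [hv]
      · simp [hv, ((towardMedian_eq_some_iff hT).1 hv).2]

theorem optionCongr_mem_aut_medianRooting (hT : T.IsTree) (φ : T ≃g T) :
    Equiv.optionCongr φ.toEquiv ∈ (medianRooting hT).aut
  | none => rfl
  | some v => (towardMedian_map_iso hT φ v).symm

theorem some_removeNone_of_mem_aut (hT : T.IsTree) (σ : (medianRooting hT).aut) (v : V) :
    some (Equiv.removeNone σ.1 v) = σ.1 (some v) := by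
  refine Equiv.removeNone_some σ.1 (Option.ne_none_iff_exists'.1 fun hv ↦ ?_)
  have σ_none : σ.1 none = none := ParentTree.aut_apply_root σ
  simpa using σ.1.injective (hv.trans σ_none.symm)

/-- Restricting an automorphism of the rooted tree `medianRooting hT` to the vertices of `T`. -/
noncomputable def isoOfAutMedianRooting (hT : T.IsTree) (σ : (medianRooting hT).aut) : T ≃g T where
  toEquiv := Equiv.removeNone σ.1
  map_rel_iff' {u v} := by
    have σ_none : σ.1 none = none := ParentTree.aut_apply_root σ
    have σ_some := some_removeNone_of_mem_aut hT σ
    have σ_toward (w : V) : towardMedian T (Equiv.removeNone σ.1 w) = σ.1 (towardMedian T w) := by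
      have parent_comm : (σ.1 (some w)).bind (towardMedian T) = σ.1 (towardMedian T w) :=
        (σ.2 (some w)).symm
      rwa [← σ_some] at parent_comm
    have toward_eq_some (w x : V) : towardMedian T (Equiv.removeNone σ.1 w) =
        some (Equiv.removeNone σ.1 x) ↔ towardMedian T w = some x := by
      rw [σ_toward, σ_some, σ.1.apply_eq_iff_eq]
    have toward_eq_none (w : V) :
        towardMedian T (Equiv.removeNone σ.1 w) = none ↔ towardMedian T w = none := by
      rw [σ_toward, ← σ.1.apply_eq_iff_eq (x := towardMedian T w), σ_none]
    simp only [adj_iff_towardMedian hT, toward_eq_some, toward_eq_none, ne_eq,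
      EmbeddingLike.apply_eq_iff_eq]

/-- Rooting a tree at its medians does not change its automorphism group. -/
noncomputable def autMedianRootingEquiv (hT : T.IsTree) :
    (T ≃g T) ≃* (medianRooting hT).aut where
  toFun φ := ⟨_, optionCongr_mem_aut_medianRooting hT φ⟩
  invFun σ := isoOfAutMedianRooting hT σ
  left_inv φ := RelIso.ext fun v ↦ DFunLike.congr_fun (Equiv.removeNone_optionCongr φ.toEquiv) v
  right_inv σ := by
    ext x : 2
    cases x with
    | none => exact (ParentTree.aut_apply_root σ).symm
    | some v => exact some_removeNone_of_mem_aut hT σ v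
  map_mul' φ ψ := by
    ext x : 2
    cases x <;> rfl

end MedianRooting

theorem exists_eq_sigmaMap_id {C : Type*} {β : C → Type*} {f : (Σ c, β c) → Σ c, β c}
    (hf : ∀ w, (f w).1 = w.1) : ∃ σ : ∀ c, β c → β c, f = Sigma.map id σ := by
  have exists_fiber_map (c : C) (x : β c) : ∃ y, f ⟨c, x⟩ = ⟨c, y⟩ := by
    have hc := hf ⟨c, x⟩
    generalize f ⟨c, x⟩ = w at hc ⊢
    subst hc
    exact ⟨w.2, rfl⟩
  choose σ hσ using exists_fiber_map
  exact ⟨σ, funext fun w ↦ hσ w.1 w.2⟩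

section RootedProduct

variable {C : Type*} {β : C → Type*} (G : SimpleGraph C) (B : ∀ c, ParentTree (β c))

/-- The parent function of the disjoint union of the rooted trees `B c`. -/
def sigmaParent (w : Σ c, β c) : Σ c, β c :=
  ⟨w.1, (B w.1).parent w.2⟩

/-- The embedding of the index set as the set of roots of the disjoint union of the `B c`. -/
def sigmaRoot : C ↪ Σ c, β c where
  toFun c := ⟨c, (B c).root⟩
  inj' _ _ h := congrArg Sigma.fst h

/-- The rooted product of a graph `G` with rooted trees `B c` indexed by its vertices
(Godsil and McKay): the root of `B c` is identified with the vertex `c` of `G`. -/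
def rootedProduct : SimpleGraph (Σ c, β c) :=
  G.map (sigmaRoot B) ⊔ SimpleGraph.fromRel fun u v ↦ sigmaParent B u = v

variable {B}

theorem sigmaParent_eq_self_iff {w : Σ c, β c} :
    sigmaParent B w = w ↔ w ∈ Set.range (sigmaRoot B) where
  mp hw := ⟨w.1, Sigma.ext rfl
    (heq_of_eq ((B w.1).parent_eq_self_iff.1 (eq_of_heq (Sigma.ext_iff.1 hw).2)).symm)⟩
  mpr := by
    rintro ⟨c, rfl⟩
    exact congrArg (Sigma.mk c) (B c).parent_root

theorem sigmaParent_sigmaRoot (c : C) : sigmaParent B (sigmaRoot B c) = sigmaRoot B c :=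
  sigmaParent_eq_self_iff.2 ⟨c, rfl⟩

theorem mk_mem_range_sigmaRoot_iff {c : C} {x : β c} :
    ⟨c, x⟩ ∈ Set.range (sigmaRoot B) ↔ x = (B c).root := by
  rw [← sigmaParent_eq_self_iff, ← (B c).parent_eq_self_iff]
  exact sigma_mk_injective.eq_iff

theorem sigmaParent_sigmaParent_ne {w : Σ c, β c} (hw : sigmaParent B w ≠ w) :
    sigmaParent B (sigmaParent B w) ≠ w := by
  obtain ⟨c, x⟩ := w
  rw [ne_eq, sigmaParent_eq_self_iff, mk_mem_range_sigmaRoot_iff] at hw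
  exact sigma_mk_injective.ne ((B c).parent_parent_ne hw)

theorem sigma_induction_on_parent {P : (Σ c, β c) → Prop} (root : ∀ c, P (sigmaRoot B c))
    (step : ∀ w, sigmaParent B w ≠ w → P (sigmaParent B w) → P w) (w : Σ c, β c) : P w := by
  obtain ⟨c, x⟩ := w
  induction x using (B c).induction_on_parent with
  | root => exact root c
  | step x hx ih =>
    refine step ⟨c, x⟩ ?_ ih
    rwa [ne_eq, sigmaParent_eq_self_iff, mk_mem_range_sigmaRoot_iff]

variable {G}

theorem rootedProduct_adj {u v : Σ c, β c} : (rootedProduct G B).Adj u v ↔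
    (∃ c d, G.Adj c d ∧ sigmaRoot B c = u ∧ sigmaRoot B d = v) ∨
      u ≠ v ∧ (sigmaParent B u = v ∨ sigmaParent B v = u) := by
  rw [rootedProduct, sup_adj, SimpleGraph.map_adj, fromRel_adj]

theorem rootedProduct_adj_sigmaRoot {c d : C} :
    (rootedProduct G B).Adj (sigmaRoot B c) (sigmaRoot B d) ↔ G.Adj c d := by
  rw [rootedProduct, sup_adj, SimpleGraph.map_adj_apply, fromRel_adj, sigmaParent_sigmaRoot,
    sigmaParent_sigmaRoot]
  tauto

theorem rootedProduct_adj_sigmaParent {w : Σ c, β c} (hw : sigmaParent B w ≠ w) :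
    (rootedProduct G B).Adj w (sigmaParent B w) :=
  rootedProduct_adj.2 (.inr ⟨hw.symm, .inl rfl⟩)

theorem rootedProduct_connected (hG : G.Connected) : (rootedProduct G B).Connected := by
  have reachable_root (w : Σ c, β c) :
      (rootedProduct G B).Reachable w (sigmaRoot B w.1) := by
    induction w using sigma_induction_on_parent (B := B) with
    | root c => rfl
    | step w hw ih => exact (rootedProduct_adj_sigmaParent hw).reachable.trans ih
  let rootHom : G →g rootedProduct G B := ⟨sigmaRoot B, rootedProduct_adj_sigmaRoot.2⟩
  have : Nonempty (Σ c, β c) := hG.nonempty.map (sigmaRoot B)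
  exact ⟨fun u v ↦ (reachable_root u).trans
    (((hG u.1 v.1).map rootHom).trans (reachable_root v).symm)⟩

theorem sigmaParent_edge_injOn :
    Set.InjOn (fun w ↦ s(w, sigmaParent B w)) (Set.range (sigmaRoot B))ᶜ := by
  intro u _ v hv huv
  rcases Sym2.eq_iff.1 huv with ⟨h, -⟩ | ⟨hu, hv'⟩
  · exact h
  · rw [Set.mem_compl_iff, ← sigmaParent_eq_self_iff] at hv
    exact absurd (hu ▸ hv') (sigmaParent_sigmaParent_ne hv)

variable (B) in
theorem edgeSet_fromRel_sigmaParent :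
    (SimpleGraph.fromRel fun u v ↦ sigmaParent B u = v).edgeSet =
      (fun w ↦ s(w, sigmaParent B w)) '' (Set.range (sigmaRoot B))ᶜ := by
  ext e
  induction e with | _ u v
  simp only [mem_edgeSet, fromRel_adj, Set.mem_image, Set.mem_compl_iff, ← sigmaParent_eq_self_iff,
    Sym2.eq_iff]
  grind

theorem ncard_edgeSet_rootedProduct [Finite C] [∀ c, Finite (β c)] :
    (rootedProduct G B).edgeSet.ncard + Nat.card C =
      G.edgeSet.ncard + Nat.card (Σ c, β c) := by
  have disj : Disjoint (G.map (sigmaRoot B)).edgeSet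
      (SimpleGraph.fromRel fun u v ↦ sigmaParent B u = v).edgeSet := by
    rw [disjoint_edgeSet, SimpleGraph.disjoint_left]
    intro u v huv
    obtain ⟨c, d, -, rfl, rfl⟩ := (map_adj _ _ _ _).1 huv
    simp +contextual [fromRel_adj, sigmaParent_sigmaRoot, eq_comm]
  have card_roots : (Set.range (sigmaRoot B)).ncard = Nat.card C :=
    Nat.card_range_of_injective (sigmaRoot B).injective
  have := Set.ncard_add_ncard_compl (Set.range (sigmaRoot B))
  rw [rootedProduct, edgeSet_sup, Set.ncard_union_eq disj, edgeSet_map,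
    Set.ncard_image_of_injective _ (Function.Embedding.injective _),
    edgeSet_fromRel_sigmaParent, sigmaParent_edge_injOn.ncard_image]
  omega

theorem isBicyclic_rootedProduct {C : Type} {β : C → Type} {G : SimpleGraph C}
    {B : ∀ c, ParentTree (β c)} [Finite C] [∀ c, Finite (β c)] (hG : G.IsBicyclic) :
    (rootedProduct G B).IsBicyclic := by
  refine ⟨rootedProduct_connected hG.1, ?_⟩
  have := ncard_edgeSet_rootedProduct (G := G) (B := B)
  have := hG.2
  omega

-- A vertex of maximal height among the non-roots in `S` has its parent as only neighbour in `S`.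
theorem subset_range_sigmaRoot_of_nontrivial [Finite C] [∀ c, Finite (β c)] {S : Set (Σ c, β c)}
    (hS : ∀ w ∈ S, (S ∩ (rootedProduct G B).neighborSet w).Nontrivial) :
    S ⊆ Set.range (sigmaRoot B) := by
  by_contra hsub
  obtain ⟨w, ⟨hwS, hw⟩, hmax⟩ := Set.exists_max_image (S \ Set.range (sigmaRoot B))
    (fun w ↦ (B w.1).height w.2) (Set.toFinite _) (Set.sdiff_nonempty.2 hsub)
  have neighbor_eq {x} (hx : x ∈ S ∩ (rootedProduct G B).neighborSet w) :
      x = sigmaParent B w := by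
    rcases rootedProduct_adj.1 hx.2 with ⟨c, d, -, rfl, -⟩ | ⟨hne, h | rfl⟩
    · exact absurd ⟨c, rfl⟩ hw
    · exact h.symm
    · have hx_root : x ∉ Set.range (sigmaRoot B) := by
        rwa [← sigmaParent_eq_self_iff]
      have hlt : (B x.1).height ((B x.1).parent x.2) < (B x.1).height x.2 :=
        (B x.1).height_parent_lt x.2 (by rwa [ne_eq, ← mk_mem_range_sigmaRoot_iff])
      exact absurd (hmax x ⟨hx.1, hx_root⟩) hlt.not_ge
  obtain ⟨x, hx, y, hy, hxy⟩ := hS w hwS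
  exact hxy ((neighbor_eq hx).trans (neighbor_eq hy).symm)

/-- The automorphism of a rooted product given by a permutation of its vertices that commutes with
the parent function and restricts to an automorphism `f` of the core graph. -/
def rootedProductIso (f : G ≃g G) (σ : Equiv.Perm (Σ c, β c))
    (hf : ∀ c, σ (sigmaRoot B c) = sigmaRoot B (f c))
    (hσ : Function.Semiconj σ (sigmaParent B) (sigmaParent B)) :
    rootedProduct G B ≃g rootedProduct G B where
  toEquiv := σ
  map_rel_iff' {u v} := by
    rw [rootedProduct_adj, rootedProduct_adj, f.surjective.exists₂]
    simp only [f.map_adj_iff, ← hf, ← hσ.eq, σ.apply_eq_iff_eq, ne_eq]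

variable (G B) in
/-- The action of the automorphism groups of the rooted trees `B c` on the rooted product. -/
def fiberHom : (∀ c, (B c).aut) →* (rootedProduct G B ≃g rootedProduct G B) where
  toFun n := rootedProductIso Iso.refl (Equiv.sigmaCongrRight fun c ↦ (n c).1)
    (fun c ↦ congrArg (Sigma.mk c) (ParentTree.aut_apply_root (n c)))
    (fun w ↦ congrArg (Sigma.mk w.1) ((n w.1).2 w.2))
  map_one' := rfl
  map_mul' _ _ := rfl

theorem fiberHom_injective : Function.Injective (fiberHom G B) := by
  intro n n' h
  ext c x
  exact sigma_mk_injective (DFunLike.congr_fun h ⟨c, x⟩)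

section Automorphisms

variable [Finite C] [∀ c, Finite (β c)]

theorem map_mem_range_sigmaRoot (hG : ∀ c, (G.neighborSet c).Nontrivial)
    (φ : rootedProduct G B ≃g rootedProduct G B) (c : C) :
    φ (sigmaRoot B c) ∈ Set.range (sigmaRoot B) := by
  suffices φ '' Set.range (sigmaRoot B) ⊆ Set.range (sigmaRoot B) from this ⟨_, ⟨c, rfl⟩, rfl⟩
  refine subset_range_sigmaRoot_of_nontrivial (G := G) ?_
  rintro _ ⟨_, ⟨c, rfl⟩, rfl⟩
  refine ((hG c).image (φ.injective.comp (sigmaRoot B).injective)).mono ?_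
  rintro _ ⟨d, hd, rfl⟩
  exact ⟨⟨_, ⟨d, rfl⟩, rfl⟩, φ.map_adj_iff.2 (rootedProduct_adj_sigmaRoot.2 hd)⟩

theorem map_mem_range_sigmaRoot_iff (hG : ∀ c, (G.neighborSet c).Nontrivial)
    (φ : rootedProduct G B ≃g rootedProduct G B) {w : Σ c, β c} :
    φ w ∈ Set.range (sigmaRoot B) ↔ w ∈ Set.range (sigmaRoot B) where
  mp := by
    rintro ⟨c, hc⟩
    rw [← φ.symm_apply_apply w, ← hc]
    exact map_mem_range_sigmaRoot hG φ.symm c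
  mpr := by
    rintro ⟨c, rfl⟩
    exact map_mem_range_sigmaRoot hG φ c

theorem map_sigmaParent (hG : ∀ c, (G.neighborSet c).Nontrivial)
    (φ : rootedProduct G B ≃g rootedProduct G B) (w : Σ c, β c) :
    φ (sigmaParent B w) = sigmaParent B (φ w) := by
  induction w using sigma_induction_on_parent (B := B) with
  | root c =>
    rw [sigmaParent_sigmaRoot, sigmaParent_eq_self_iff.2 (map_mem_range_sigmaRoot hG φ c)]
  | step w hw ih =>
    rcases rootedProduct_adj.1 (φ.map_adj_iff.2 (rootedProduct_adj_sigmaParent hw)) with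
      ⟨c, -, -, hc, -⟩ | ⟨-, h | h⟩
    · have w_root := (map_mem_range_sigmaRoot_iff hG φ).1 ⟨c, hc⟩
      exact absurd (sigmaParent_eq_self_iff.2 w_root) hw
    · exact h.symm
    · rw [← ih] at h
      exact absurd (φ.injective h) (sigmaParent_sigmaParent_ne hw)

theorem map_sigmaRoot (hG : ∀ c, (G.neighborSet c).Nontrivial)
    (φ : rootedProduct G B ≃g rootedProduct G B) (c : C) :
    φ (sigmaRoot B c) = sigmaRoot B (φ (sigmaRoot B c)).1 := by
  obtain ⟨d, hd⟩ := map_mem_range_sigmaRoot hG φ c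
  rw [← hd]
  rfl

theorem map_fst_eq (hG : ∀ c, (G.neighborSet c).Nontrivial)
    (φ : rootedProduct G B ≃g rootedProduct G B) (w : Σ c, β c) :
    (φ w).1 = (φ (sigmaRoot B w.1)).1 := by
  induction w using sigma_induction_on_parent (B := B) with
  | root c => rfl
  | step w _ ih =>
    rw [map_sigmaParent hG] at ih
    exact ih

/-- The automorphism of the core graph induced by an automorphism of a rooted product. -/
def coreIso (hG : ∀ c, (G.neighborSet c).Nontrivial)
    (φ : rootedProduct G B ≃g rootedProduct G B) : G ≃g G where
  toFun c := (φ (sigmaRoot B c)).1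
  invFun c := (φ.symm (sigmaRoot B c)).1
  left_inv c := by
    beta_reduce
    rw [← map_sigmaRoot hG, φ.symm_apply_apply]
    rfl
  right_inv c := by
    beta_reduce
    rw [← map_sigmaRoot hG, φ.apply_symm_apply]
    rfl
  map_rel_iff' {c d} := by
    rw [Equiv.coe_fn_mk, ← rootedProduct_adj_sigmaRoot (B := B), ← map_sigmaRoot hG,
      ← map_sigmaRoot hG, φ.map_adj_iff, rootedProduct_adj_sigmaRoot]

theorem mem_range_fiberHom (hG : ∀ c, (G.neighborSet c).Nontrivial)
    {φ : rootedProduct G B ≃g rootedProduct G B} (hφ : ∀ w, (φ w).1 = w.1) :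
    φ ∈ (fiberHom G B).range := by
  obtain ⟨σ, hσ⟩ := exists_eq_sigmaMap_id hφ
  have σ_injective (c : C) : Function.Injective (σ c) :=
    (hσ ▸ φ.injective).of_sigma_map c
  have σ_parent (c : C) : Function.Semiconj (σ c) (B c).parent (B c).parent := by
    intro x
    have map_parent := map_sigmaParent hG φ ⟨c, x⟩
    rw [hσ] at map_parent
    exact sigma_mk_injective map_parent
  refine ⟨fun c ↦ ⟨.ofBijective (σ c) (Finite.injective_iff_bijective.1 (σ_injective c)),
    σ_parent c⟩, RelIso.ext fun w ↦ congrFun hσ.symm w⟩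

end Automorphisms

end RootedProduct

section EquivariantDecoration

/-- An action by automorphisms of a graph, as a homomorphism to its automorphism group. -/
def smulIsoHom {Q C : Type*} [Group Q] [MulAction Q C] {G : SimpleGraph C}
    (hQ : ∀ (q : Q) c d, G.Adj (q • c) (q • d) ↔ G.Adj c d) : Q →* (G ≃g G) where
  toFun q := ⟨MulAction.toPerm q, hQ q _ _⟩
  map_one' := RelIso.ext fun c ↦ one_smul Q c
  map_mul' q q' := RelIso.ext fun c ↦ mul_smul q q' c

variable {Q I : Type*} [Group Q] {J : I → Type*} [∀ i, MulAction Q (J i)]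

variable (Q J) in
/-- The action of `Q` on `∏ i, (A i)^(J i)` permuting the copies of each `A i`. -/
def copyPermHom (A : I → Type*) [∀ i, Group (A i)] : Q →* MulAut (∀ i, J i → A i) where
  toFun q := MulEquiv.piCongrRight fun _ ↦ mulAutArrow q
  map_one' := by
    ext n i j
    simp
  map_mul' q q' := by
    ext n i j
    simp

variable {γ : I → Type*} {G : SimpleGraph (Σ i, J i)} {B : ∀ i, ParentTree (γ i)}

theorem sigma_mk_sigma_mk_congr {i : I} {j j' : J i} (h : j = j') (x : γ i) :
    (⟨⟨i, j⟩, x⟩ : Σ c : Σ i, J i, γ c.1) = ⟨⟨i, j'⟩, x⟩ := by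
  rw [h]

variable (G B) in
/-- The graph obtained from `G` by attaching a copy of `B i` to every vertex `⟨i, j⟩`. -/
abbrev decoration : SimpleGraph (Σ c : Σ i, J i, γ c.1) :=
  rootedProduct G fun c ↦ B c.1

variable (B) in
/-- The action on `decoration G B` in which `Q` permutes the attached copies of each `B i`. -/
def baseHom (hQ : ∀ (q : Q) c d, G.Adj (q • c) (q • d) ↔ G.Adj c d) :
    Q →* (decoration G B ≃g decoration G B) where
  toFun q := rootedProductIso (smulIsoHom hQ q)
    { toFun := fun w ↦ ⟨q • w.1, w.2⟩
      invFun := fun w ↦ ⟨q⁻¹ • w.1, w.2⟩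
      left_inv := fun ⟨⟨_, j⟩, x⟩ ↦ sigma_mk_sigma_mk_congr (inv_smul_smul q j) x
      right_inv := fun ⟨⟨_, j⟩, x⟩ ↦ sigma_mk_sigma_mk_congr (smul_inv_smul q j) x }
    (fun _ ↦ rfl) (fun _ ↦ rfl)
  map_one' := RelIso.ext fun ⟨⟨_, j⟩, x⟩ ↦ sigma_mk_sigma_mk_congr (one_smul Q j) x
  map_mul' q q' := RelIso.ext fun ⟨⟨_, j⟩, x⟩ ↦ sigma_mk_sigma_mk_congr (mul_smul q q' j) x

variable (J G B) in
/-- The action of `∏ i, Aut(B i)^(J i)` on `decoration G B`: a curried form of `fiberHom`. -/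
def copyFiberHom : (∀ i, J i → (B i).aut) →* (decoration G B ≃g decoration G B) where
  toFun n := fiberHom G (fun c ↦ B c.1) fun c ↦ n c.1 c.2
  map_one' := map_one _
  map_mul' _ _ := map_mul _ _ _

theorem copyFiberHom_injective : Function.Injective (copyFiberHom J G B) :=
  fiberHom_injective.comp fun _ _ h ↦ funext₂ fun i j ↦ congrFun h ⟨i, j⟩

variable (B) in
/-- The combined action of `∏ i, Aut(B i)^(J i)` and `Q` on `decoration G B`. -/
def decorationHom (hQ : ∀ (q : Q) c d, G.Adj (q • c) (q • d) ↔ G.Adj c d) :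
    (∀ i, J i → (B i).aut) ⋊[copyPermHom Q J fun i ↦ (B i).aut] Q →*
      (decoration G B ≃g decoration G B) :=
  SemidirectProduct.lift (copyFiberHom J G B) (baseHom B hQ) fun q ↦ by
    ext n ⟨⟨i, j⟩, x⟩ : 2
    exact sigma_mk_sigma_mk_congr (smul_inv_smul q j).symm _

theorem decorationHom_injective (hQ : ∀ (q : Q) c d, G.Adj (q • c) (q • d) ↔ G.Adj c d)
    (hinj : Function.Injective (smulIsoHom hQ)) : Function.Injective (decorationHom B hQ) := by
  refine (injective_iff_map_eq_one _).2 fun ⟨n, q⟩ hp ↦ ?_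
  have q_eq_one : q = 1 := by
    refine (injective_iff_map_eq_one (smulIsoHom hQ)).1 hinj _ (RelIso.ext fun c ↦ ?_)
    have root_eq := DFunLike.congr_fun hp (⟨c, (B c.1).root⟩ : Σ c : Σ i, J i, γ c.1)
    exact congrArg Sigma.fst root_eq
  subst q_eq_one
  have n_eq_one : n = 1 := by
    have fiber_mul_base : copyFiberHom J G B n * baseHom B hQ 1 = 1 := hp
    rw [map_one, mul_one] at fiber_mul_base
    exact (injective_iff_map_eq_one (copyFiberHom J G B)).1 copyFiberHom_injective n fiber_mul_base
  rw [n_eq_one]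
  rfl

theorem decorationHom_surjective [Finite (Σ i, J i)] [∀ i, Finite (γ i)]
    (hG : ∀ c, (G.neighborSet c).Nontrivial) (hQ : ∀ (q : Q) c d, G.Adj (q • c) (q • d) ↔ G.Adj c d)
    (hsurj : Function.Surjective (smulIsoHom hQ)) : Function.Surjective (decorationHom B hQ) := by
  intro φ
  obtain ⟨q, hq⟩ := hsurj (coreIso hG φ)
  have fst_eq (w : Σ c : Σ i, J i, γ c.1) : ((φ * (baseHom B hQ q)⁻¹) w).1 = w.1 :=
    calc (φ ⟨q⁻¹ • w.1, w.2⟩).1 = coreIso hG φ (q⁻¹ • w.1) := map_fst_eq hG φ _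
      _ = w.1 := by
        rw [← hq]
        exact smul_inv_smul q w.1
  obtain ⟨n, hn⟩ := mem_range_fiberHom hG fst_eq
  exact ⟨⟨fun i j ↦ n ⟨i, j⟩, q⟩, eq_mul_inv_iff_mul_eq.1 hn⟩

/-- The automorphism group of `decoration G B` when `Q` is the automorphism group of `G`. -/
noncomputable def decorationEquiv [Finite (Σ i, J i)] [∀ i, Finite (γ i)]
    (hG : ∀ c, (G.neighborSet c).Nontrivial) (hQ : ∀ (q : Q) c d, G.Adj (q • c) (q • d) ↔ G.Adj c d)
    (hbij : Function.Bijective (smulIsoHom hQ)) :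
    (∀ i, J i → (B i).aut) ⋊[copyPermHom Q J fun i ↦ (B i).aut] Q ≃*
      (decoration G B ≃g decoration G B) :=
  .ofBijective (decorationHom B hQ) ⟨decorationHom_injective hQ hbij.1,
    decorationHom_surjective hG hQ hbij.2⟩

/-- Isomorphisms of the factors induce an isomorphism of the semidirect products. -/
def copyPermCongr {A A' : I → Type*} [∀ i, Group (A i)] [∀ i, Group (A' i)]
    (f : ∀ i, A i ≃* A' i) :
    (∀ i, J i → A i) ⋊[copyPermHom Q J A] Q ≃* (∀ i, J i → A' i) ⋊[copyPermHom Q J A'] Q :=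
  SemidirectProduct.congr
    (MulEquiv.piCongrRight fun i ↦ MulEquiv.piCongrRight fun _ ↦ f i)
    (MulEquiv.refl Q) fun _ ↦ rfl

/-- If `Q` is the automorphism group of `G`, then attaching trees `T i` to the vertices of `G`, one
isomorphism type per index `i`, yields the automorphism group `∏ i, Aut(T i)^(J i) ⋊ Q`. -/
noncomputable def autDecorationEquiv {V : I → Type*} [∀ i, Fintype (V i)] [Finite (Σ i, J i)]
    {T : ∀ i, SimpleGraph (V i)} (hT : ∀ i, (T i).IsTree)
    (hG : ∀ c, (G.neighborSet c).Nontrivial) (hQ : ∀ (q : Q) c d, G.Adj (q • c) (q • d) ↔ G.Adj c d)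
    (hbij : Function.Bijective (smulIsoHom hQ)) :
    (decoration G (fun i ↦ medianRooting (hT i)) ≃g decoration G (fun i ↦ medianRooting (hT i))) ≃*
      (∀ i, J i → (T i ≃g T i)) ⋊[copyPermHom Q J fun i ↦ T i ≃g T i] Q :=
  (decorationEquiv hG hQ hbij).symm.trans
    (copyPermCongr fun i ↦ (autMedianRootingEquiv (hT i)).symm)

end EquivariantDecoration

section ThetaGraph

/-- The orbits of the Klein four-group on the vertices of `thetaGraph`: the middle of the short
path, the two branch vertices, the middles of the two long paths, and the other four vertices. -/
inductive ThetaOrbit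
  | shortMid
  | branch
  | longMid
  | corner
  deriving DecidableEq

namespace ThetaOrbit

instance : Fintype ThetaOrbit where
  elems := {shortMid, branch, longMid, corner}
  complete o := by cases o <;> decide

/-- The vertices of `thetaGraph` in a given orbit, indexed as the coordinates in `B2group`. -/
abbrev Index : ThetaOrbit → Type
  | shortMid => Unit
  | branch => ZMod 2
  | longMid => ZMod 2
  | corner => ZMod 2 × ZMod 2

instance : (o : ThetaOrbit) → DecidableEq o.Index
  | shortMid => inferInstanceAs (DecidableEq Unit)
  | branch | longMid => inferInstanceAs (DecidableEq (ZMod 2))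
  | corner => inferInstanceAs (DecidableEq (ZMod 2 × ZMod 2))

instance : (o : ThetaOrbit) → Fintype o.Index
  | shortMid => inferInstanceAs (Fintype Unit)
  | branch | longMid => inferInstanceAs (Fintype (ZMod 2))
  | corner => inferInstanceAs (Fintype (ZMod 2 × ZMod 2))

/-- The action by which `K4` permutes the coordinates in `B2act`, and trivial on `shortMid`. -/
instance : (o : ThetaOrbit) → MulAction K4 o.Index
  | shortMid =>
    { smul := fun _ j ↦ j
      one_smul := fun _ ↦ rfl
      mul_smul := fun _ _ _ ↦ rfl }
  | branch => MulAction.compHom (ZMod 2) fstK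
  | longMid => MulAction.compHom (ZMod 2) sndK
  | corner => inferInstanceAs (MulAction K4 (ZMod 2 × ZMod 2))

end ThetaOrbit

open ThetaOrbit

/-- The vertices of `thetaGraph`. -/
abbrev ThetaVertex : Type :=
  Σ o : ThetaOrbit, o.Index

/-- The edges of `thetaGraph`, each listed in one direction. -/
def thetaEdge : ThetaVertex → ThetaVertex → Bool
  | ⟨shortMid, _⟩, ⟨branch, _⟩ => true
  | ⟨branch, i⟩, ⟨corner, k⟩ => i = k.1
  | ⟨longMid, j⟩, ⟨corner, k⟩ => j = k.2
  | _, _ => false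

/-- The theta graph with path lengths `2`, `4`, `4`: the branch vertices are joined by the path
through `shortMid` and, for every `j`, by the path through the corners `(i, j)` and `longMid j`. -/
def thetaGraph : SimpleGraph ThetaVertex :=
  SimpleGraph.fromRel fun u v ↦ thetaEdge u v

instance : DecidableRel thetaGraph.Adj :=
  inferInstanceAs (DecidableRel fun u v : ThetaVertex ↦ u ≠ v ∧ (thetaEdge u v ∨ thetaEdge v u))

theorem thetaGraph_adj_smul (q : K4) (u v : ThetaVertex) :
    thetaGraph.Adj (q • u) (q • v) ↔ thetaGraph.Adj u v := by
  revert q u v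
  decide

theorem thetaGraph_neighborSet_nontrivial (u : ThetaVertex) :
    (thetaGraph.neighborSet u).Nontrivial := by
  have exists_two : ∀ u, ∃ v, thetaGraph.Adj u v ∧ ∃ w, thetaGraph.Adj u w ∧ v ≠ w := by decide
  exact exists_two u

theorem isBicyclic_thetaGraph : thetaGraph.IsBicyclic := by
  refine ⟨by decide, ?_⟩
  rw [← coe_edgeFinset, Set.ncard_coe_finset, Nat.card_eq_fintype_card]
  decide

theorem thetaGraph_fst_eq {u v : ThetaVertex} (hdeg : thetaGraph.degree u = thetaGraph.degree v)
    (hsum : ∑ w ∈ thetaGraph.neighborFinset u, thetaGraph.degree w =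
      ∑ w ∈ thetaGraph.neighborFinset v, thetaGraph.degree w) : u.1 = v.1 := by
  revert u v
  decide

theorem sum_degree_neighborFinset_map_iso {C : Type*} {G : SimpleGraph C} [G.LocallyFinite]
    (φ : G ≃g G) (c : C) :
    ∑ d ∈ G.neighborFinset (φ c), G.degree d = ∑ d ∈ G.neighborFinset c, G.degree d := by
  refine (Finset.sum_equiv φ.toEquiv (fun d ↦ ?_) fun d _ ↦ (φ.degree_eq d).symm).symm
  simpa using (φ.map_adj_iff (v := c) (w := d)).symm

theorem thetaGraph_adj_branch_corner {i : ZMod 2} {k : ZMod 2 × ZMod 2} :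
    thetaGraph.Adj ⟨branch, i⟩ ⟨corner, k⟩ ↔ i = k.1 := by
  revert i k
  decide

theorem thetaGraph_adj_longMid_corner {j : ZMod 2} {k : ZMod 2 × ZMod 2} :
    thetaGraph.Adj ⟨longMid, j⟩ ⟨corner, k⟩ ↔ j = k.2 := by
  revert j k
  decide

theorem exists_eq_add_of_injective {f : ZMod 2 → ZMod 2} (hf : Function.Injective f) :
    ∃ a, ∀ i, f i = a + i := by
  revert f
  decide

theorem exists_smul_eq_of_iso_thetaGraph (φ : thetaGraph ≃g thetaGraph) :
    ∃ q : K4, ∀ u, φ u = q • u := by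
  obtain ⟨σ, hσ⟩ := exists_eq_sigmaMap_id fun u ↦
    thetaGraph_fst_eq (φ.degree_eq u) (sum_degree_neighborFinset_map_iso φ u)
  have σ_injective (o : ThetaOrbit) : Function.Injective (σ o) := (hσ ▸ φ.injective).of_sigma_map o
  obtain ⟨a, ha⟩ := exists_eq_add_of_injective (σ_injective branch)
  obtain ⟨b, hb⟩ := exists_eq_add_of_injective (σ_injective longMid)
  have σ_corner_fst (k : ZMod 2 × ZMod 2) : a + k.1 = (σ corner k).1 := by
    have hadj := φ.map_adj_iff.2 (thetaGraph_adj_branch_corner.2 (rfl : k.1 = k.1))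
    rw [hσ] at hadj
    exact (ha k.1).symm.trans (thetaGraph_adj_branch_corner.1 hadj)
  have σ_corner_snd (k : ZMod 2 × ZMod 2) : b + k.2 = (σ corner k).2 := by
    have hadj := φ.map_adj_iff.2 (thetaGraph_adj_longMid_corner.2 (rfl : k.2 = k.2))
    rw [hσ] at hadj
    exact (hb k.2).symm.trans (thetaGraph_adj_longMid_corner.1 hadj)
  refine ⟨.ofAdd (a, b), fun u ↦ ?_⟩
  rw [hσ]
  rcases u with ⟨_ | _ | _ | _, k⟩
  · rfl
  · exact congrArg (Sigma.mk branch) (ha k)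
  · exact congrArg (Sigma.mk longMid) (hb k)
  · exact congrArg (Sigma.mk corner) (Prod.ext (σ_corner_fst k) (σ_corner_snd k)).symm

theorem bijective_smulIsoHom_thetaGraph :
    Function.Bijective (smulIsoHom thetaGraph_adj_smul) where
  left q q' h := by
    have smul_corner_injective :
        Function.Injective fun q : K4 ↦ q • (⟨corner, 0⟩ : ThetaVertex) := by
      decide
    exact smul_corner_injective (DFunLike.congr_fun h ⟨corner, 0⟩)
  right φ := (exists_smul_eq_of_iso_thetaGraph φ).imp fun _ hq ↦ RelIso.ext fun u ↦ (hq u).symm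

/-- The semidirect product for the four orbits of `thetaGraph`, in the coordinates of `B2group`. -/
def thetaSemidirectEquiv (A : ThetaOrbit → Type) [∀ o, Group (A o)] :
    (∀ o : ThetaOrbit, o.Index → A o) ⋊[copyPermHom K4 Index A] K4 ≃*
      A shortMid × B2group (A corner) (A branch) (A longMid) where
  toFun p := (p.left shortMid (), ⟨(p.left corner, p.left branch, p.left longMid), p.right⟩)
  invFun p :=
    { left := fun
        | shortMid => fun _ ↦ p.1
        | branch => p.2.left.2.1
        | longMid => p.2.left.2.2
        | corner => p.2.left.1
      right := p.2.right }
  left_inv p := by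
    refine SemidirectProduct.ext (funext fun o ↦ ?_) rfl
    cases o <;> rfl
  right_inv _ := rfl
  map_mul' _ _ := rfl

theorem exists_isBicyclic_aut_mulEquiv {V : ThetaOrbit → Type} [∀ o, Finite (V o)]
    {T : ∀ o, SimpleGraph (V o)} (hT : ∀ o, (T o).IsTree) :
    ∃ (W : Type) (_ : Fintype W) (Δ : SimpleGraph W), Δ.IsBicyclic ∧
      Nonempty ((Δ ≃g Δ) ≃* (T shortMid ≃g T shortMid) ×
        B2group (T corner ≃g T corner) (T branch ≃g T branch) (T longMid ≃g T longMid)) := by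
  have := fun o ↦ Fintype.ofFinite (V o)
  exact ⟨_, inferInstance, decoration thetaGraph fun o ↦ medianRooting (hT o),
    isBicyclic_rootedProduct isBicyclic_thetaGraph,
    ⟨(autDecorationEquiv hT thetaGraph_neighborSet_nontrivial thetaGraph_adj_smul
      bijective_smulIsoHom_thetaGraph).trans (thetaSemidirectEquiv fun o ↦ T o ≃g T o)⟩⟩

end ThetaGraph

/-- For all finite trees `Ψ`, `T`, `Λ` and `Υ` there is a bicyclic graph
`Δ` with `Aut(Δ) ≅ Aut(Ψ) × ((D⁴ × H² × K²) ⋊ (Z₂ × Z₂))`, where `D = Aut(T)`,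
`H = Aut(Λ)`, `K = Aut(Υ)` and `Z₂ × Z₂` acts as described in `B2act`. -/
theorem B2_realizable_as_aut_bicyclic
    {U V X Y : Type} [Fintype U] [Fintype V] [Fintype X] [Fintype Y]
    (Ψ : SimpleGraph U) (hΨ : Ψ.IsTree) (T : SimpleGraph V) (hT : T.IsTree)
    (Λ : SimpleGraph X) (hΛ : Λ.IsTree) (Υ : SimpleGraph Y) (hΥ : Υ.IsTree) :
    ∃ (W : Type) (_ : Fintype W) (Δ : SimpleGraph W),
      Δ.IsBicyclic ∧
        Nonempty ((Δ ≃g Δ) ≃* (Ψ ≃g Ψ) × B2group (T ≃g T) (Λ ≃g Λ) (Υ ≃g Υ)) := by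
  let vertices : ThetaOrbit → Type
    | .shortMid => U
    | .branch => X
    | .longMid => Y
    | .corner => V
  let trees : ∀ o, SimpleGraph (vertices o)
    | .shortMid => Ψ
    | .branch => Λ
    | .longMid => Υ
    | .corner => T
  have : ∀ o, Finite (vertices o)
    | .shortMid => inferInstanceAs (Finite U)
    | .branch => inferInstanceAs (Finite X)
    | .longMid => inferInstanceAs (Finite Y)
    | .corner => inferInstanceAs (Finite V)
  have isTree_trees : ∀ o, (trees o).IsTree
    | .shortMid => hΨ
    | .branch => hΛ
    | .longMid => hΥ
    | .corner => hT
  exact exists_isBicyclic_aut_mulEquiv isTree_trees
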